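/- arXiv:1802.05507 — 6 statements merged into one kernel-verified Lean document; each statement's English description precedes it below -/
import Mathlib

section
/- Let 𝔟 ∈ ℝ⁶ satisfy ⟨𝔟, 𝔟⟩ = 0, 𝔟⁰ = 0, and suppose 𝔟 is not a scalar multiple of ε₅. Then 𝔟¹ + 𝔟⁴ ≠ 0, and there exist a unique unit vector n = (n¹,n²,n³) ∈ S² and a unique h ∈ ℝ such that 𝔟 = (𝔟¹+𝔟⁴) · (0, (1+n¹)/2, n²/√2, n³/√2, (1−n¹)/2, h/√2). Hence every point of the orbit Q_Π represents a unique oriented plane Π_h(n) = {x ∈ ℝ³ : nᵀx = h} of Euclidean space. -/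
/-- The scalar product of signature (4,2) on `ℝ⁶`. -/
def lprod (a b : Fin 6 → ℝ) : ℝ :=
  -(a 0 * b 5 + a 5 * b 0) - (a 1 * b 4 + a 4 * b 1) + a 2 * b 2 + a 3 * b 3

/-- The basis vector `ε₅` of `ℝ⁶`. -/
def eps5 : Fin 6 → ℝ := ![0, 0, 0, 0, 0, 1]

/-- The vector `(0, (1+n¹)/2, n²/√2, n³/√2, (1−n¹)/2, h/√2) ∈ ℝ⁶`
representing the oriented plane `Π_h(n)` with unit normal `n` and height `h`. -/
noncomputable def plVecH (n : Fin 3 → ℝ) (h : ℝ) : Fin 6 → ℝ :=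
  ![0, (1 + n 0) / 2, n 1 / Real.sqrt 2, n 2 / Real.sqrt 2, (1 - n 0) / 2,
    h / Real.sqrt 2]

/-!
On the hyperplane `𝔟⁰ = 0` nullity is the Minkowski light-cone equation
`(𝔟¹ - 𝔟⁴)² + (√2 𝔟²)² + (√2 𝔟³)² = (𝔟¹ + 𝔟⁴)²`, in which `𝔟⁵` does not occur. If the time
coordinate `𝔟¹ + 𝔟⁴` vanishes, then so do the three space coordinates, and `𝔟` is a multiple of
`ε₅`. Otherwise, dividing the space coordinates by the time coordinate yields a point of the unit
sphere, the normal `n`, while `𝔟⁵` is a free parameter which encodes the height `h`.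
-/

/-- The normal `n` of the plane represented by `𝔟`: the space part of `𝔟` in Minkowski coordinates,
divided by the time coordinate `𝔟¹ + 𝔟⁴`. Where `𝔟¹ + 𝔟⁴ = 0` no plane is represented and the
value is the junk `0`. -/
noncomputable def planeNormal (b : Fin 6 → ℝ) : Fin 3 → ℝ :=
  (b 1 + b 4)⁻¹ • ![b 1 - b 4, √2 * b 2, √2 * b 3]

/-- The height `h` of the plane represented by `𝔟`, with the junk value `0` where
`𝔟¹ + 𝔟⁴ = 0`. -/
noncomputable def planeHeight (b : Fin 6 → ℝ) : ℝ :=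
  (b 1 + b 4)⁻¹ * (√2 * b 5)

section NullVectors

variable {b : Fin 6 → ℝ}

theorem lprod_self_eq_zero_iff_of_zero (hb0 : b 0 = 0) :
    lprod b b = 0 ↔ (b 1 - b 4) ^ 2 + 2 * b 2 ^ 2 + 2 * b 3 ^ 2 = (b 1 + b 4) ^ 2 := by
  simp only [lprod, hb0]
  constructor <;> intro h <;> linarith

theorem eq_smul_eps5_of_add_eq_zero (hnull : lprod b b = 0) (hb0 : b 0 = 0)
    (hs : b 1 + b 4 = 0) : b = b 5 • eps5 := by
  have hcone : (b 1 - b 4) ^ 2 + 2 * b 2 ^ 2 + 2 * b 3 ^ 2 = 0 := by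
    simpa [hs] using (lprod_self_eq_zero_iff_of_zero hb0).mp hnull
  have hd : (b 1 - b 4) ^ 2 = 0 := by
    linarith [sq_nonneg (b 1 - b 4), sq_nonneg (b 2), sq_nonneg (b 3)]
  have h2 : b 2 ^ 2 = 0 := by linarith [sq_nonneg (b 2), sq_nonneg (b 3)]
  have h3 : b 3 ^ 2 = 0 := by linarith
  rw [sq_eq_zero_iff] at hd h2 h3
  have h1 : b 1 = 0 := by linarith
  have h4 : b 4 = 0 := by linarith
  ext i
  fin_cases i <;> simp [eps5, hb0, h1, h2, h3, h4]

theorem sum_sq_planeNormal (hnull : lprod b b = 0) (hb0 : b 0 = 0) (hs : b 1 + b 4 ≠ 0) :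
    planeNormal b 0 ^ 2 + planeNormal b 1 ^ 2 + planeNormal b 2 ^ 2 = 1 := by
  have hcone := (lprod_self_eq_zero_iff_of_zero hb0).mp hnull
  calc planeNormal b 0 ^ 2 + planeNormal b 1 ^ 2 + planeNormal b 2 ^ 2
      = ((b 1 - b 4) ^ 2 + √2 ^ 2 * b 2 ^ 2 + √2 ^ 2 * b 3 ^ 2) / (b 1 + b 4) ^ 2 := by
        simp only [planeNormal, Pi.smul_apply, smul_eq_mul, Matrix.cons_val]
        field_simp
    _ = 1 := by
        rw [Real.sq_sqrt zero_le_two, hcone, div_self (pow_ne_zero 2 hs)]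

theorem eq_smul_plVecH (hb0 : b 0 = 0) (hs : b 1 + b 4 ≠ 0) :
    b = (b 1 + b 4) • plVecH (planeNormal b) (planeHeight b) := by
  ext i
  fin_cases i <;>
    simp only [plVecH, planeNormal, planeHeight, hb0, Fin.zero_eta, Fin.mk_one, Fin.reduceFinMk,
      Pi.smul_apply, smul_eq_mul, Matrix.cons_val] <;>
    field_simp <;> ring

end NullVectors

theorem smul_plVecH_one_add_four (c : ℝ) (n : Fin 3 → ℝ) (h : ℝ) :
    (c • plVecH n h) 1 + (c • plVecH n h) 4 = c := by
  simp only [plVecH, Pi.smul_apply, smul_eq_mul, Matrix.cons_val]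
  ring

theorem planeNormal_smul_plVecH {c : ℝ} (hc : c ≠ 0) (n : Fin 3 → ℝ) (h : ℝ) :
    planeNormal (c • plVecH n h) = n := by
  rw [planeNormal, smul_plVecH_one_add_four, inv_smul_eq_iff₀ hc]
  ext i
  fin_cases i <;>
    simp only [plVecH, Fin.zero_eta, Fin.mk_one, Fin.reduceFinMk, Pi.smul_apply, smul_eq_mul,
      Matrix.cons_val] <;>
    field_simp
  ring

theorem planeHeight_smul_plVecH {c : ℝ} (hc : c ≠ 0) (n : Fin 3 → ℝ) (h : ℝ) :
    planeHeight (c • plVecH n h) = h := by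
  rw [planeHeight, smul_plVecH_one_add_four, inv_mul_eq_iff_eq_mul₀ hc]
  simp only [plVecH, Pi.smul_apply, smul_eq_mul, Matrix.cons_val]
  field_simp

/-- If `𝔟 ∈ ℝ⁶` is null, `𝔟⁰ = 0`, and `𝔟` is not a scalar multiple of `ε₅`, then
`𝔟¹ + 𝔟⁴ ≠ 0` and there is a unique pair `(n, h)` with `n` a unit vector such that
`𝔟 = (𝔟¹+𝔟⁴) · (0, (1+n¹)/2, n²/√2, n³/√2, (1−n¹)/2, h/√2)`: every point of the
orbit `Q_Π` represents a unique oriented plane `Π_h(n)`. -/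
theorem stmt5 (b : Fin 6 → ℝ) (hnull : lprod b b = 0) (hb0 : b 0 = 0)
    (hne : ∀ c : ℝ, b ≠ c • eps5) :
    b 1 + b 4 ≠ 0 ∧
    ∃! nh : (Fin 3 → ℝ) × ℝ,
      (nh.1 0) ^ 2 + (nh.1 1) ^ 2 + (nh.1 2) ^ 2 = 1 ∧
      b = (b 1 + b 4) • plVecH nh.1 nh.2 := by
  have hs : b 1 + b 4 ≠ 0 := fun hs => hne _ (eq_smul_eps5_of_add_eq_zero hnull hb0 hs)
  refine ⟨hs, (planeNormal b, planeHeight b),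
    ⟨sum_sq_planeNormal hnull hb0 hs, eq_smul_plVecH hb0 hs⟩, ?_⟩
  rintro ⟨n, h⟩ ⟨-, hb⟩
  rw [hb, planeNormal_smul_plVecH hs, planeHeight_smul_plVecH hs]
end

section
/- Let B ∈ M₄(ℝ) satisfy Bᵀ ηₗ B = ηₗ. Then for every V ∈ ℝ⁴ the matrix A(B;V) satisfies A(B;V)ᵀ η A(B;V) = η, A(B;V) ε₅ = ε₅, and det A(B;V) = det B. In particular, if B is a restricted Lorentz transformation then A(B;V) belongs to the Laguerre group. -/
open Matrix

/-- The Lorentz scalar product on `ℝ⁴`: `(V,W) = −V⁰W⁰ + V¹W¹ + V²W² + V³W³`. -/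
def mprod (V W : Fin 4 → ℝ) : ℝ :=
  -(V 0 * W 0) + V 1 * W 1 + V 2 * W 2 + V 3 * W 3

/-- The Gram matrix `η` of the signature-(4,2) scalar product
`⟨𝔞,𝔟⟩ = −(𝔞⁰𝔟⁵ + 𝔞⁵𝔟⁰) − (𝔞¹𝔟⁴ + 𝔞⁴𝔟¹) + 𝔞²𝔟² + 𝔞³𝔟³` on `ℝ⁶`. -/
def etaM : Matrix (Fin 6) (Fin 6) ℝ :=
  !![0, 0, 0, 0, 0, -1;
     0, 0, 0, 0, -1, 0;
     0, 0, 1, 0, 0, 0;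
     0, 0, 0, 1, 0, 0;
     0, -1, 0, 0, 0, 0;
     -1, 0, 0, 0, 0, 0]

/-- The Gram matrix `ηₗ = diag(−1,1,1,1)` of the Lorentz product on `ℝ⁴`. -/
def etaL : Matrix (Fin 4) (Fin 4) ℝ :=
  !![-1, 0, 0, 0;
     0, 1, 0, 0;
     0, 0, 1, 0;
     0, 0, 0, 1]

/-- The matrix `K`. -/
noncomputable def Kmat : Matrix (Fin 4) (Fin 4) ℝ :=
  !![1 / Real.sqrt 2, 1 / Real.sqrt 2, 0, 0;
     0, 0, 1, 0;
     0, 0, 0, 1;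
     1 / Real.sqrt 2, -(1 / Real.sqrt 2), 0, 0]

/-- The matrix `K⁻¹`. -/
noncomputable def KmatInv : Matrix (Fin 4) (Fin 4) ℝ :=
  !![1 / Real.sqrt 2, 0, 0, 1 / Real.sqrt 2;
     1 / Real.sqrt 2, 0, 0, -(1 / Real.sqrt 2);
     0, 1, 0, 0;
     0, 0, 1, 0]

/-- The row vector `*Ṽ = (−Ṽ³, Ṽ¹, Ṽ², −Ṽ⁰)`, acting on `W` by
`*Ṽ(W) = −(Ṽ⁰W³ + Ṽ³W⁰) + Ṽ¹W¹ + Ṽ²W²`. -/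
def starV (Vt : Fin 4 → ℝ) : Fin 4 → ℝ := ![-(Vt 3), Vt 1, Vt 2, -(Vt 0)]

/-- The element `A(B;V) ∈ M₆(ℝ)` of the Laguerre group: the block matrix with block
rows `(1, 0, 0)`, `(Ṽ, B̃, 0)`, `((V,V)/2, *Ṽ·B̃, 1)`, where `Ṽ = KV`, `B̃ = KBK⁻¹`. -/
noncomputable def AofBV (B : Matrix (Fin 4) (Fin 4) ℝ) (V : Fin 4 → ℝ) :
    Matrix (Fin 6) (Fin 6) ℝ := fun i j =>
  let Vt : Fin 4 → ℝ := Kmat.mulVec V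
  let Bt : Matrix (Fin 4) (Fin 4) ℝ := Kmat * B * KmatInv
  if hi0 : i.val = 0 then (if j.val = 0 then 1 else 0)
  else if hi : i.val ≤ 4 then
    if hj0 : j.val = 0 then Vt ⟨i.val - 1, by omega⟩
    else if hj : j.val ≤ 4 then Bt ⟨i.val - 1, by omega⟩ ⟨j.val - 1, by omega⟩
    else 0
  else
    if hj0 : j.val = 0 then mprod V V / 2
    else if hj : j.val ≤ 4 then Matrix.vecMul (starV Vt) Bt ⟨j.val - 1, by omega⟩
    else 1

/-!
In the null coordinates `Ṽ = KV` the Lorentz form has Gram matrix `etaNull`, and `η` is the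
orthogonal sum of `etaNull` with the hyperbolic plane spanned by `ε₀` and `ε₅`. An isometry of such
a sum that fixes `ε₅` is block lower triangular: its middle block is an isometry of the smaller
form, its first column has the form `(1, w, q)` with `2q = (w, w)`, and invariance of the form then
forces its last row. The matrix `A(B;V)` has exactly this shape, with middle block `B̃ = KBK⁻¹`,
`w = Ṽ` and `2q = (V, V)`.
-/

section GeneralBlocks

variable {R k m n : Type*} [CommRing R]

theorem conj_isometry_of_mul_eq_one [Fintype m] [DecidableEq m] [Fintype n]
    {G B : Matrix n n R} {H : Matrix m m R} {P : Matrix m n R} {Q : Matrix n m R}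
    (hPQ : P * Q = 1) (hP : Pᵀ * H * P = G) (hB : Bᵀ * G * B = G) :
    (P * B * Q)ᵀ * H * (P * B * Q) = H :=
  calc (P * B * Q)ᵀ * H * (P * B * Q)
      = Qᵀ * (Bᵀ * (Pᵀ * H * P) * B) * Q := by simp only [transpose_mul, Matrix.mul_assoc]
    _ = Qᵀ * (Pᵀ * H * P) * Q := by rw [hP, hB]
    _ = (P * Q)ᵀ * H * (P * Q) := by simp only [transpose_mul, Matrix.mul_assoc]
    _ = H := by rw [hPQ, transpose_one, Matrix.one_mul, Matrix.mul_one]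

/-- The Gram matrix of the orthogonal sum of `H` with hyperbolic planes spanned by pairs of null
vectors of product `-1`; the two copies of `k` in the index type hold these pairs. -/
def hyperbolicExtension [DecidableEq k] (H : Matrix n n R) : Matrix (k ⊕ n ⊕ k) (k ⊕ n ⊕ k) R :=
  fromBlocks 0 (fromCols 0 (-1)) (fromRows 0 (-1)) (fromBlocks H 0 0 0)

/-- The block matrix with block rows `(1, 0, 0)`, `(W, M, 0)`, `(Q, Wᵀ * H * M, 1)`. Every isometry
of `hyperbolicExtension H` that fixes the null vectors indexed by the second copy of `k` has this
shape. -/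
def parabolicBlock [DecidableEq k] [Fintype n] (H M : Matrix n n R) (W : Matrix n k R)
    (Q : Matrix k k R) : Matrix (k ⊕ n ⊕ k) (k ⊕ n ⊕ k) R :=
  fromBlocks 1 0 (fromRows W Q) (fromBlocks M 0 (Wᵀ * H * M) 1)

variable [DecidableEq k] [Fintype n]

theorem transpose_parabolicBlock {H : Matrix n n R} (hH : H.IsSymm) (M : Matrix n n R)
    (W : Matrix n k R) (Q : Matrix k k R) :
    (parabolicBlock H M W Q)ᵀ =
      fromBlocks 1 (fromCols Wᵀ Qᵀ) 0 (fromBlocks Mᵀ (Mᵀ * (H * W)) 0 1) := by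
  simp [parabolicBlock, fromBlocks_transpose, transpose_fromRows, hH.eq]

variable [Fintype k]

theorem hyperbolicExtension_mul_parabolicBlock (H M : Matrix n n R) (W : Matrix n k R)
    (Q : Matrix k k R) :
    hyperbolicExtension H * parabolicBlock H M W Q =
      fromBlocks (-Q) (fromCols (-(Wᵀ * H * M)) (-1)) (fromRows (H * W) (-1))
        (fromBlocks (H * M) 0 0 0) := by
  have hcol : fromRows 0 (-1) + fromRows (H * W) 0 = fromRows (H * W) (-1 : Matrix k k R) := by
    ext (i | i) j <;> simp
  simp [parabolicBlock, hyperbolicExtension, fromBlocks_multiply, fromCols_mul_fromRows,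
    fromCols_mul_fromBlocks, fromBlocks_mul_fromRows, hcol]

theorem parabolicBlock_isometry {H M : Matrix n n R} (hH : H.IsSymm) (hM : Mᵀ * H * M = H)
    {W : Matrix n k R} {Q : Matrix k k R} (hQ : Q + Qᵀ = Wᵀ * H * W) :
    (parabolicBlock H M W Q)ᵀ * hyperbolicExtension H * parabolicBlock H M W Q =
      hyperbolicExtension H := by
  have hcorner : -Q + fromCols Wᵀ Qᵀ * fromRows (H * W) (-1 : Matrix k k R) = 0 := by
    rw [fromCols_mul_fromRows, ← Matrix.mul_assoc, ← hQ, Matrix.mul_neg, Matrix.mul_one]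
    abel
  have hrow : fromCols (-(Wᵀ * H * M)) (-1) + fromCols Wᵀ Qᵀ *
      (fromBlocks (H * M) 0 0 0 : Matrix (n ⊕ k) (n ⊕ k) R) =
      fromCols 0 (-1 : Matrix k k R) := by
    rw [fromCols_mul_fromBlocks]
    ext i (j | j) <;> simp [Matrix.mul_assoc]
  have hcol : (fromBlocks Mᵀ (Mᵀ * (H * W)) 0 1 : Matrix (n ⊕ k) (n ⊕ k) R) *
      fromRows (H * W) (-1 : Matrix k k R) = fromRows 0 (-1) := by
    simp [fromBlocks_mul_fromRows]
  have hblock : (fromBlocks Mᵀ (Mᵀ * (H * W)) 0 1 : Matrix (n ⊕ k) (n ⊕ k) R) *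
      (fromBlocks (H * M) 0 0 0 : Matrix (n ⊕ k) (n ⊕ k) R) = fromBlocks H 0 0 0 := by
    simp [fromBlocks_multiply, ← Matrix.mul_assoc, hM]
  rw [Matrix.mul_assoc, hyperbolicExtension_mul_parabolicBlock, transpose_parabolicBlock hH,
    fromBlocks_multiply, hyperbolicExtension]
  simp only [Matrix.one_mul, Matrix.zero_mul, zero_add, hcorner, hrow, hcol, hblock]

theorem parabolicBlock_mulVec_elim_zero (H M : Matrix n n R) (W : Matrix n k R) (Q : Matrix k k R)
    (y : k → R) :
    parabolicBlock H M W Q *ᵥ (0 ⊕ᵥ ((0 : n → R) ⊕ᵥ y)) = (0 : k → R) ⊕ᵥ ((0 : n → R) ⊕ᵥ y) := by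
  simp [parabolicBlock, fromBlocks_mulVec]

theorem det_parabolicBlock [DecidableEq n] (H M : Matrix n n R) (W : Matrix n k R)
    (Q : Matrix k k R) : (parabolicBlock H M W Q).det = M.det := by
  simp only [parabolicBlock, det_fromBlocks_zero₁₂, det_one, one_mul, mul_one]

end GeneralBlocks

/-- The Gram matrix of the Lorentz product in the coordinates `Ṽ = KV`. -/
def etaNull : Matrix (Fin 4) (Fin 4) ℝ :=
  !![0, 0, 0, -1;
     0, 1, 0, 0;
     0, 0, 1, 0;
     -1, 0, 0, 0]

theorem etaNull_isSymm : etaNull.IsSymm := by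
  ext i j
  fin_cases i <;> fin_cases j <;> rfl

theorem inv_sqrt_two_mul_inv_sqrt_two : (√2)⁻¹ * (√2)⁻¹ = (1 / 2 : ℝ) := by
  rw [← mul_inv, Real.mul_self_sqrt zero_le_two, one_div]

theorem Kmat_mul_KmatInv : Kmat * KmatInv = 1 := by
  ext i j
  fin_cases i <;> fin_cases j <;>
    simp [Kmat, KmatInv, mul_apply, Fin.sum_univ_four, inv_sqrt_two_mul_inv_sqrt_two] <;>
    norm_num

theorem Kmat_transpose_mul_etaNull_mul_Kmat : Kmatᵀ * etaNull * Kmat = etaL := by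
  ext i j
  fin_cases i <;> fin_cases j <;>
    simp [Kmat, etaNull, etaL, mul_apply, Fin.sum_univ_four, inv_sqrt_two_mul_inv_sqrt_two] <;>
    norm_num

theorem mprod_eq_dotProduct (V W : Fin 4 → ℝ) : mprod V W = V ⬝ᵥ etaL *ᵥ W := by
  simp [mprod, etaL, mulVec, dotProduct, Fin.sum_univ_four]

theorem mprod_eq_Kmat_dotProduct (V W : Fin 4 → ℝ) :
    mprod V W = Kmat *ᵥ V ⬝ᵥ etaNull *ᵥ Kmat *ᵥ W := by
  rw [mprod_eq_dotProduct, ← Kmat_transpose_mul_etaNull_mul_Kmat, ← mulVec_mulVec,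
    ← mulVec_mulVec, dotProduct_mulVec, vecMul_transpose]

theorem starV_eq_vecMul_etaNull (w : Fin 4 → ℝ) : starV w = w ᵥ* etaNull := by
  ext i
  fin_cases i <;> simp [starV, etaNull, vecMul, dotProduct, Fin.sum_univ_four]

/-- The splitting of the coordinates of `ℝ⁶` into the index `0`, the indices `1, …, 4` and the
index `5`. -/
def finSixEquiv : Fin 1 ⊕ Fin 4 ⊕ Fin 1 ≃ Fin 6 :=
  (Equiv.sumCongr (Equiv.refl _) finSumFinEquiv).trans finSumFinEquiv

theorem etaM_eq_reindex_hyperbolicExtension :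
    etaM = reindex finSixEquiv finSixEquiv (hyperbolicExtension etaNull) := by
  ext i j
  fin_cases i <;> fin_cases j <;> rfl

theorem AofBV_eq_reindex_parabolicBlock (B : Matrix (Fin 4) (Fin 4) ℝ) (V : Fin 4 → ℝ) :
    AofBV B V = reindex finSixEquiv finSixEquiv
      (parabolicBlock etaNull (Kmat * B * KmatInv) (replicateCol (Fin 1) (Kmat *ᵥ V))
        !![mprod V V / 2]) := by
  have hrow (w : Fin 4 → ℝ) (M : Matrix (Fin 4) (Fin 4) ℝ) :
      (replicateCol (Fin 1) w)ᵀ * etaNull * M = replicateRow (Fin 1) (starV w ᵥ* M) := by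
    rw [transpose_replicateCol, starV_eq_vecMul_etaNull, replicateRow_vecMul, replicateRow_vecMul]
  rw [parabolicBlock, hrow]
  ext i j
  fin_cases i <;> fin_cases j <;> rfl

theorem AofBV_isometry {B : Matrix (Fin 4) (Fin 4) ℝ} (hB : Bᵀ * etaL * B = etaL)
    (V : Fin 4 → ℝ) : (AofBV B V)ᵀ * etaM * AofBV B V = etaM := by
  have hM : (Kmat * B * KmatInv)ᵀ * etaNull * (Kmat * B * KmatInv) = etaNull :=
    conj_isometry_of_mul_eq_one Kmat_mul_KmatInv Kmat_transpose_mul_etaNull_mul_Kmat hB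
  have hQ : !![mprod V V / 2] + !![mprod V V / 2]ᵀ =
      (replicateCol (Fin 1) (Kmat *ᵥ V))ᵀ * etaNull * replicateCol (Fin 1) (Kmat *ᵥ V) := by
    rw [mprod_eq_Kmat_dotProduct, Matrix.mul_assoc, ← replicateCol_mulVec]
    ext i j
    fin_cases i
    fin_cases j
    simp
  rw [AofBV_eq_reindex_parabolicBlock, etaM_eq_reindex_hyperbolicExtension]
  simp only [reindex_apply, transpose_submatrix, submatrix_mul_equiv]
  rw [parabolicBlock_isometry etaNull_isSymm hM hQ]

theorem AofBV_mulVec_eps5 (B : Matrix (Fin 4) (Fin 4) ℝ) (V : Fin 4 → ℝ) :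
    AofBV B V *ᵥ eps5 = eps5 := by
  have heps : eps5 = ((0 : Fin 1 → ℝ) ⊕ᵥ ((0 : Fin 4 → ℝ) ⊕ᵥ 1)) ∘ finSixEquiv.symm := by
    ext i
    fin_cases i <;> rfl
  rw [AofBV_eq_reindex_parabolicBlock, heps, reindex_apply, submatrix_mulVec_equiv,
    Equiv.symm_symm, Function.comp_assoc, Equiv.symm_comp_self, Function.comp_id,
    parabolicBlock_mulVec_elim_zero]

theorem det_AofBV (B : Matrix (Fin 4) (Fin 4) ℝ) (V : Fin 4 → ℝ) :
    (AofBV B V).det = B.det := by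
  rw [AofBV_eq_reindex_parabolicBlock, det_reindex_self, det_parabolicBlock,
    det_conj_of_mul_eq_one Kmat_mul_KmatInv (mul_eq_one_comm.mp Kmat_mul_KmatInv)]

/-- If `Bᵀ ηₗ B = ηₗ`, then for every `V ∈ ℝ⁴` the matrix `A(B;V)` satisfies
`A(B;V)ᵀ η A(B;V) = η`, `A(B;V) ε₅ = ε₅`, and `det A(B;V) = det B`. In particular,
if `B` is a restricted Lorentz transformation then `A(B;V)` belongs to the Laguerre
group. -/
theorem stmt9 (B : Matrix (Fin 4) (Fin 4) ℝ) (hB : Bᵀ * etaL * B = etaL)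
    (V : Fin 4 → ℝ) :
    (AofBV B V)ᵀ * etaM * AofBV B V = etaM ∧
    (AofBV B V).mulVec eps5 = eps5 ∧
    (AofBV B V).det = B.det :=
  ⟨AofBV_isometry hB V, AofBV_mulVec_eps5 B V, det_AofBV B V⟩
end

section
/- Let B, B' ∈ M₄(ℝ) satisfy Bᵀ ηₗ B = ηₗ and B'ᵀ ηₗ B' = ηₗ. Then for all V, V' ∈ ℝ⁴ one has A(B;V) · A(B';V') = A(BB'; V + BV'). Moreover A(B;V) = A(B';V') implies B = B' and V = V'. Hence (B;V) ↦ A(B;V) is an injective group homomorphism from the Poincaré group G₆ ⋉ ℝ⁴ into the Laguerre group. -/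
open Matrix

/-
`A(B;V)` is a translation block times a linear block. Both are homomorphisms, and moving the linear
part of an isometry `B` past the translation by `V` turns it into the translation by `B V`; this is
the semidirect product law. Injectivity holds because the product displays `B` and `V` as blocks.
Since `*Ṽ = Vᵀ ηₗ K⁻¹`, the matrix `K` enters only through conjugation by `diag(1, K, 1)`, an
algebra isomorphism.
-/

section ParaboloidLift

variable {n R : Type*} [Fintype n] [CommSemiring R]

theorem mulVec_vecMul_vecMul_of_isometry {G B : Matrix n n R} (hB : Bᵀ * G * B = G) (v : n → R) :
    (B *ᵥ v) ᵥ* G ᵥ* B = v ᵥ* G := by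
  rw [← vecMul_transpose, vecMul_vecMul, vecMul_vecMul, ← Matrix.mul_assoc, hB]

variable [Invertible (2 : R)]

theorem half_quadratic_add {G : Matrix n n R} (hG : G.IsSymm) (v w : n → R) :
    ⅟2 * ((v + w) ⬝ᵥ G *ᵥ (v + w)) =
      ⅟2 * (v ⬝ᵥ G *ᵥ v) + ((v ᵥ* G) ⬝ᵥ w + ⅟2 * (w ⬝ᵥ G *ᵥ w)) := by
  have hsymm : w ⬝ᵥ G *ᵥ v = v ⬝ᵥ G *ᵥ w := by
    rw [← dotProduct_transpose_mulVec, hG.eq]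
  simp only [mulVec_add, add_dotProduct, dotProduct_add, hsymm, ← dotProduct_mulVec]
  calc
    _ = ⅟2 * (v ⬝ᵥ G *ᵥ v) + (⅟2 * 2 * (v ⬝ᵥ G *ᵥ w) + ⅟2 * (w ⬝ᵥ G *ᵥ w)) := by ring
    _ = _ := by rw [invOf_mul_self, one_mul]

/-- The point `(v, ½ vᵀ G v)` above `v` on the paraboloid of the quadratic form with Gram matrix
`G`. -/
def paraboloidLift (G : Matrix n n R) (v : n → R) : n ⊕ Fin 1 → R :=
  Sum.elim v fun _ => ⅟2 * (v ⬝ᵥ G *ᵥ v)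

theorem paraboloidLift_add [DecidableEq n] {G : Matrix n n R} (hG : G.IsSymm) (v w : n → R) :
    paraboloidLift G (v + w) = paraboloidLift G v +
      fromBlocks 1 0 (replicateRow (Fin 1) (v ᵥ* G)) 1 *ᵥ paraboloidLift G w := by
  ext (i | i)
  · simp [paraboloidLift, fromBlocks_mulVec]
  · simpa [paraboloidLift, fromBlocks_mulVec, mulVec] using half_quadratic_add hG v w

theorem fromBlocks_mulVec_paraboloidLift {m : Type*} (G : Matrix n n R) (L : Matrix m n R)
    (v : n → R) :
    fromBlocks L 0 0 (1 : Matrix (Fin 1) (Fin 1) R) *ᵥ paraboloidLift G v =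
      Sum.elim (L *ᵥ v) fun _ => ⅟2 * (v ⬝ᵥ G *ᵥ v) := by
  simp [paraboloidLift, fromBlocks_mulVec]

theorem paraboloidLift_mulVec {G B : Matrix n n R} (hB : Bᵀ * G * B = G) (v : n → R) :
    paraboloidLift G (B *ᵥ v) = fromBlocks B 0 0 1 *ᵥ paraboloidLift G v := by
  have hquad : (B *ᵥ v) ⬝ᵥ G *ᵥ (B *ᵥ v) = v ⬝ᵥ G *ᵥ v := by
    rw [dotProduct_mulVec, dotProduct_mulVec, mulVec_vecMul_vecMul_of_isometry hB,
      ← dotProduct_mulVec]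
  rw [fromBlocks_mulVec_paraboloidLift, paraboloidLift, hquad]

theorem paraboloidLift_injective (G : Matrix n n R) : Function.Injective (paraboloidLift G) :=
  fun _ _ h => congrArg (· ∘ Sum.inl) h

end ParaboloidLift

section PoincareBlocks

variable {n R : Type*} [Fintype n] [DecidableEq n] [CommSemiring R]

/-- The embedding `B ↦ diag(1, B, 1)`, which represents the linear maps in the `1 + n + 1` block
decomposition. -/
def linearBlock : Matrix n n R →* Matrix (Fin 1 ⊕ n ⊕ Fin 1) (Fin 1 ⊕ n ⊕ Fin 1) R where
  toFun B := fromBlocks 1 0 0 (fromBlocks B 0 0 1)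
  map_one' := by simp only [fromBlocks_one]
  map_mul' B B' := by simp [fromBlocks_multiply]

theorem linearBlock_apply (B : Matrix n n R) :
    linearBlock B = fromBlocks 1 0 0 (fromBlocks B 0 0 1) := rfl

variable [Invertible (2 : R)]

/-- The unipotent matrix with block rows `(1, 0, 0)`, `(v, 1, 0)`, `(½ vᵀ G v, vᵀ G, 1)`, which
represents the translation by `v` for the Gram matrix `G`. -/
def translationBlock (G : Matrix n n R) (v : n → R) :
    Matrix (Fin 1 ⊕ n ⊕ Fin 1) (Fin 1 ⊕ n ⊕ Fin 1) R :=
  fromBlocks 1 0 (replicateCol (Fin 1) (paraboloidLift G v))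
    (fromBlocks 1 0 (replicateRow (Fin 1) (v ᵥ* G)) 1)

/-- The matrix representing the affine map `w ↦ B w + v`, for `B` an isometry of the Gram matrix
`G`. -/
def poincareBlock (G B : Matrix n n R) (v : n → R) :
    Matrix (Fin 1 ⊕ n ⊕ Fin 1) (Fin 1 ⊕ n ⊕ Fin 1) R :=
  translationBlock G v * linearBlock B

variable {G : Matrix n n R}

theorem translationBlock_add (hG : G.IsSymm) (v w : n → R) :
    translationBlock G (v + w) = translationBlock G v * translationBlock G w := by
  simp [translationBlock, fromBlocks_multiply, paraboloidLift_add hG, replicateCol_mulVec,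
    add_vecMul]

theorem linearBlock_mul_translationBlock {B : Matrix n n R} (hB : Bᵀ * G * B = G) (v : n → R) :
    linearBlock B * translationBlock G v = translationBlock G (B *ᵥ v) * linearBlock B := by
  simp [linearBlock_apply, translationBlock, fromBlocks_multiply, paraboloidLift_mulVec hB,
    replicateCol_mulVec, ← replicateRow_vecMul, mulVec_vecMul_vecMul_of_isometry hB,
    -vecMul_vecMul]

theorem poincareBlock_mul (hG : G.IsSymm) {B : Matrix n n R} (hB : Bᵀ * G * B = G)
    (B' : Matrix n n R) (v v' : n → R) :
    poincareBlock G B v * poincareBlock G B' v' = poincareBlock G (B * B') (v + B *ᵥ v') := by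
  calc
    _ = translationBlock G v * (linearBlock B * translationBlock G v') * linearBlock B' := by
      simp only [poincareBlock, Matrix.mul_assoc]
    _ = translationBlock G v * translationBlock G (B *ᵥ v') * (linearBlock B * linearBlock B') := by
      rw [linearBlock_mul_translationBlock hB]
      simp only [Matrix.mul_assoc]
    _ = _ := by rw [poincareBlock, translationBlock_add hG, map_mul]

theorem poincareBlock_eq_fromBlocks (B : Matrix n n R) (v : n → R) :
    poincareBlock G B v =
      fromBlocks 1 0 (replicateCol (Fin 1) (paraboloidLift G v))
        (fromBlocks B 0 (replicateRow (Fin 1) (v ᵥ* (G * B))) 1) := by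
  simp [poincareBlock, translationBlock, linearBlock_apply, fromBlocks_multiply,
    ← replicateRow_vecMul]

theorem poincareBlock_injective2 : Function.Injective2 (poincareBlock G) := by
  intro B B' v v' h
  simp only [poincareBlock_eq_fromBlocks, fromBlocks_inj] at h
  obtain ⟨-, -, hcol, hB, -⟩ := h
  exact ⟨hB, paraboloidLift_injective G (replicateCol_inj.mp hcol)⟩

end PoincareBlocks

theorem isSymm_etaL : etaL.IsSymm := by
  ext i j
  fin_cases i <;> fin_cases j <;> rfl

theorem starV_Kmat_mulVec (V : Fin 4 → ℝ) : starV (Kmat *ᵥ V) = V ᵥ* (etaL * KmatInv) := by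
  ext i
  fin_cases i <;>
    simp [starV, Kmat, KmatInv, etaL, vecMul, mulVec, dotProduct, Matrix.mul_apply,
      Fin.sum_univ_four] <;> ring

theorem starV_vecMul_conj (B : Matrix (Fin 4) (Fin 4) ℝ) (V : Fin 4 → ℝ) :
    starV (Kmat *ᵥ V) ᵥ* (Kmat * B * KmatInv) = V ᵥ* (etaL * B * KmatInv) := by
  rw [starV_Kmat_mulVec, vecMul_vecMul, Matrix.mul_assoc Kmat, ← Matrix.mul_assoc,
    Matrix.mul_assoc etaL, mul_eq_one_comm.mp Kmat_mul_KmatInv, Matrix.mul_one, Matrix.mul_assoc]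

/-- The matrix `K` as a unit. -/
noncomputable def KmatUnit : (Matrix (Fin 4) (Fin 4) ℝ)ˣ := .mkOfMulEqOne _ _ Kmat_mul_KmatInv

/-- The numbering of the coordinates of `1 + 4 + 1` blocks by `Fin 6`. -/
def blockIndexEquiv : Fin 1 ⊕ Fin 4 ⊕ Fin 1 ≃ Fin 6 :=
  (Equiv.sumCongr (.refl _) finSumFinEquiv).trans finSumFinEquiv

theorem blockIndexEquiv_inl (i : Fin 1) : blockIndexEquiv (.inl i) = 0 := by
  fin_cases i
  rfl

theorem blockIndexEquiv_inr_inl (i : Fin 4) :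
    blockIndexEquiv (.inr (.inl i)) = i.castSucc.succ :=
  Fin.ext (add_comm 1 i.val)

theorem blockIndexEquiv_inr_inr (i : Fin 1) : blockIndexEquiv (.inr (.inr i)) = Fin.last 5 := by
  fin_cases i
  rfl

/-- The change of coordinates on matrices that conjugates by `diag(1, K, 1)` and then numbers the
blocks by `Fin 6`. -/
noncomputable def laguerreCoordinates :
    Matrix (Fin 1 ⊕ Fin 4 ⊕ Fin 1) (Fin 1 ⊕ Fin 4 ⊕ Fin 1) ℝ ≃ₐ[ℝ] Matrix (Fin 6) (Fin 6) ℝ :=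
  (MulSemiringAction.toAlgEquiv ℝ _ (ConjAct.toConjAct (Units.map linearBlock KmatUnit))).trans
    (reindexAlgEquiv ℝ ℝ blockIndexEquiv)

theorem laguerreCoordinates_apply (M : Matrix (Fin 1 ⊕ Fin 4 ⊕ Fin 1) (Fin 1 ⊕ Fin 4 ⊕ Fin 1) ℝ) :
    laguerreCoordinates M =
      reindex blockIndexEquiv blockIndexEquiv (linearBlock Kmat * M * linearBlock KmatInv) := rfl

theorem AofBV_eq_reindex_fromBlocks (B : Matrix (Fin 4) (Fin 4) ℝ) (V : Fin 4 → ℝ) :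
    AofBV B V = reindex blockIndexEquiv blockIndexEquiv
      (fromBlocks 1 0
        (replicateCol (Fin 1) (Sum.elim (Kmat *ᵥ V) fun _ => mprod V V / 2))
        (fromBlocks (Kmat * B * KmatInv) 0
          (replicateRow (Fin 1) (starV (Kmat *ᵥ V) ᵥ* (Kmat * B * KmatInv))) 1)) := by
  rw [← Equiv.symm_apply_eq]
  ext (i | i | i) (j | j | j) <;>
    simp [AofBV, blockIndexEquiv_inl, blockIndexEquiv_inr_inl, blockIndexEquiv_inr_inr,
      Matrix.one_apply, eq_iff_true_of_subsingleton]

theorem AofBV_eq_laguerreCoordinates (B : Matrix (Fin 4) (Fin 4) ℝ) (V : Fin 4 → ℝ) :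
    AofBV B V = laguerreCoordinates (poincareBlock etaL B V) := by
  have hlift : fromBlocks Kmat 0 0 (1 : Matrix (Fin 1) (Fin 1) ℝ) *ᵥ paraboloidLift etaL V =
      Sum.elim (Kmat *ᵥ V) fun _ => mprod V V / 2 := by
    rw [fromBlocks_mulVec_paraboloidLift, mprod_eq_dotProduct, invOf_eq_inv, div_eq_inv_mul]
  rw [AofBV_eq_reindex_fromBlocks, laguerreCoordinates_apply]
  congr 1
  simp [poincareBlock_eq_fromBlocks, linearBlock_apply, fromBlocks_multiply, ← hlift,
    replicateCol_mulVec, ← replicateRow_vecMul, starV_vecMul_conj]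

theorem stmt10_general (B B' : Matrix (Fin 4) (Fin 4) ℝ) :
    (Bᵀ * etaL * B = etaL → ∀ V V' : Fin 4 → ℝ,
      AofBV B V * AofBV B' V' = AofBV (B * B') (V + B *ᵥ V')) ∧
    (∀ V V' : Fin 4 → ℝ, AofBV B V = AofBV B' V' → B = B' ∧ V = V') := by
  simp only [AofBV_eq_laguerreCoordinates]
  constructor
  · intro hB V V'
    rw [← map_mul, poincareBlock_mul isSymm_etaL hB]
  · intro V V' h
    exact poincareBlock_injective2 (laguerreCoordinates.injective h)

/-- If `B` and `B'` are Lorentz transformations, then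
`A(B;V) · A(B';V') = A(BB'; V + BV')` for all `V, V'`, and `A(B;V) = A(B';V')`
implies `B = B'` and `V = V'`: the map `(B;V) ↦ A(B;V)` is an injective group
homomorphism from the Poincaré group `G₆ ⋉ ℝ⁴` into the Laguerre group. -/
theorem stmt10 (B B' : Matrix (Fin 4) (Fin 4) ℝ)
    (hB : Bᵀ * etaL * B = etaL) (hB' : B'ᵀ * etaL * B' = etaL) :
    (∀ V V' : Fin 4 → ℝ,
      AofBV B V * AofBV B' V' = AofBV (B * B') (V + B.mulVec V')) ∧
    (∀ V V' : Fin 4 → ℝ, AofBV B V = AofBV B' V' → B = B' ∧ V = V') := by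
  exact ⟨(stmt10_general B B').1 hB, (stmt10_general B B').2⟩
end

section
/- The set 𝔩 = {a ∈ M₆(ℝ) : aᵀ η + η a = 0 and a ε₅ = 0} is a Lie subalgebra of 𝔤𝔩(6,ℝ) (it is a linear subspace closed under the matrix commutator), and dim_ℝ 𝔩 = 10. Explicitly, a ∈ 𝔩 if and only if its entire first row vanishes, its last column vanishes, and its remaining entries are determined by the ten parameters a¹₀, a²₀, a³₀, a⁴₀, a¹₁, a¹₂, a¹₃, a²₁, a³₁, a³₂ through the relations a²₂ = a³₃ = a⁵₅ = 0, a⁴₄ = −a¹₁, a²₃ = −a³₂, a⁴₂ = a²₁, a⁴₃ = a³₁, a²₄ = a¹₂, a³₄ = a¹₃, a⁵₁ = −a⁴₀, a⁵₂ = a²₀, a⁵₃ = a³₀, a⁵₄ = −a¹₀, a¹₄ = a⁴₁ = a⁵₀ = 0. -/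
open Matrix

/-- The set `𝔩 = {a ∈ M₆(ℝ) : aᵀ η + η a = 0, a ε₅ = 0}`, the Lie algebra of the
Laguerre group. -/
def lagSet : Set (Matrix (Fin 6) (Fin 6) ℝ) :=
  {a | aᵀ * etaM + etaM * a = 0 ∧ a.mulVec eps5 = 0}

/-!
Since `η` is symmetric, `a` is skew-adjoint for `η` exactly when `η * a` is skew-symmetric, and
since `η` is invertible, `η * a` kills `ε₅` exactly when `a` does. So `a ↦ η * a` identifies `𝔩`
with the skew-symmetric `6 × 6` matrices whose last row and column vanish, that is, with `𝔰𝔬(5)` as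
a vector space, of dimension `5.choose 2 = 10`. The rows of `η * a` are up to sign those of `a` in
another order, so the skew-symmetry of `η * a`, read entry by entry, is the list of relations.
-/

open LieAlgebra.Orthogonal

attribute [local instance] LieRing.ofAssociativeRing

section General

variable {n R : Type*} [CommRing R] [Fintype n]

section DecidableEq

variable [DecidableEq n]

/-- The Lie subalgebra of the square matrices that annihilate the vector `v`, that is, the
infinitesimal stabilizer of `v`. -/
def matrixAnnihilator (v : n → R) : LieSubalgebra R (Matrix n n R) where
  carrier := {A | A *ᵥ v = 0}
  add_mem' {A B} hA hB := by simp_all [add_mulVec]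
  zero_mem' := zero_mulVec v
  smul_mem' c A hA := by simp_all [smul_mulVec]
  lie_mem' {A B} hA hB := by
    simp_all [LieRing.of_associative_ring_bracket, sub_mulVec, ← mulVec_mulVec]

theorem mem_matrixAnnihilator {v : n → R} {A : Matrix n n R} :
    A ∈ matrixAnnihilator v ↔ A *ᵥ v = 0 := Iff.rfl

theorem mem_matrixAnnihilator_single {i : n} {A : Matrix n n R} :
    A ∈ matrixAnnihilator (Pi.single i 1) ↔ ∀ j, A j i = 0 := by
  simp [mem_matrixAnnihilator, funext_iff]

theorem mem_so_iff_forall {A : Matrix n n R} : A ∈ so n R ↔ ∀ i j, A j i = -A i j := by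
  simp [← Matrix.ext_iff]

theorem mul_mem_so_iff {J A : Matrix n n R} (hJ : J.IsSymm) :
    J * A ∈ so n R ↔ A ∈ skewAdjointMatricesLieSubalgebra J := by
  simp [Matrix.IsSkewAdjoint, IsAdjointPair, hJ.eq]

theorem mul_mem_matrixAnnihilator_iff {J A : Matrix n n R} {v : n → R} (hJ : IsUnit J) :
    J * A ∈ matrixAnnihilator v ↔ A ∈ matrixAnnihilator v := by
  rw [mem_matrixAnnihilator, mem_matrixAnnihilator, ← mulVec_mulVec,
    (mulVec_injective_of_isUnit hJ).eq_iff' (mulVec_zero J)]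

theorem finrank_skewAdjoint_inf_matrixAnnihilator {J : Matrix n n R} (hJ : J.IsSymm)
    (hJu : IsUnit J) (v : n → R) :
    Module.finrank R ↥(skewAdjointMatricesLieSubalgebra J ⊓ matrixAnnihilator v) =
      Module.finrank R ↥(so n R ⊓ matrixAnnihilator v) := by
  obtain ⟨u, rfl⟩ := hJu
  let mulLeft := DistribMulAction.toLinearEquiv R (Matrix n n R) u
  have comap_eq : (so n R ⊓ matrixAnnihilator v).toSubmodule.comap mulLeft.toLinearMap =
      (skewAdjointMatricesLieSubalgebra u.val ⊓ matrixAnnihilator v).toSubmodule := by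
    ext A
    exact and_congr (mul_mem_so_iff hJ) (mul_mem_matrixAnnihilator_iff u.isUnit)
  exact ((LinearEquiv.ofEq _ _ comap_eq.symm).trans (mulLeft.ofSubmodule' _)).finrank_eq

/-- The linear equivalence between the skew-symmetric matrices that annihilate the `i`-th basis
vector and the skew-symmetric matrices without row and column `i`: delete this row and column,
respectively insert zeros in their place. -/
def soInfAnnihilatorSingleEquiv (i : n) :
    ↥(so n R ⊓ matrixAnnihilator (Pi.single i 1)) ≃ₗ[R] so {j // j ≠ i} R where
  toFun A := ⟨A.1.submatrix (↑) (↑), mem_so_iff_forall.2 fun j k =>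
    mem_so_iff_forall.1 A.2.1 j k⟩
  invFun B := ⟨of fun j k => if h : j ≠ i ∧ k ≠ i then B.1 ⟨j, h.1⟩ ⟨k, h.2⟩ else 0, by
    have skew := mem_so_iff_forall.1 B.2
    refine ⟨mem_so_iff_forall.2 fun j k => ?_, mem_matrixAnnihilator_single.2 fun j => by simp⟩
    by_cases hj : j = i <;> by_cases hk : k = i <;> simp [hj, hk, skew ⟨j, _⟩ ⟨k, _⟩]⟩
  map_add' _ _ := rfl
  map_smul' _ _ := rfl
  left_inv A := by
    have column_eq_zero := mem_matrixAnnihilator_single.1 A.2.2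
    have row_eq_zero (k : n) : A.1 i k = 0 := by
      rw [mem_so_iff_forall.1 A.2.1 k i, column_eq_zero, neg_zero]
    ext j k
    by_cases hj : j = i <;> by_cases hk : k = i <;> simp [hj, hk, column_eq_zero, row_eq_zero]
  right_inv B := by
    ext j k
    simp [j.2, k.2]

theorem apply_self_eq_zero_of_mem_so [NoZeroDivisors R] [NeZero (2 : R)] {A : Matrix n n R}
    (hA : A ∈ so n R) (i : n) : A i i = 0 := by
  have two_mul_eq_zero : 2 * A i i = 0 := by
    rw [two_mul, ← eq_neg_iff_add_eq_zero]
    exact mem_so_iff_forall.1 hA i i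
  exact (mul_eq_zero.1 two_mul_eq_zero).resolve_left two_ne_zero

end DecidableEq

variable (n R) in
/-- The linear equivalence between the skew-symmetric matrices and the families of scalars indexed
by the positions strictly above the diagonal. -/
def soEquivStrictUpper [LinearOrder n] [NoZeroDivisors R] [NeZero (2 : R)] :
    so n R ≃ₗ[R] ({p : n × n // p.1 < p.2} → R) where
  toFun A p := A.1 p.1.1 p.1.2
  invFun f := ⟨of fun i j => if h : i < j then f ⟨(i, j), h⟩ else
      if h : j < i then -f ⟨(j, i), h⟩ else 0, mem_so_iff_forall.2 fun i j => by
    rcases lt_trichotomy i j with h | rfl | h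
    · simp [h, h.not_gt]
    · simp
    · simp [h, h.not_gt]⟩
  map_add' _ _ := rfl
  map_smul' _ _ := rfl
  left_inv A := by
    ext i j
    rcases lt_trichotomy i j with h | rfl | h
    · simp [h]
    · simp [apply_self_eq_zero_of_mem_so A.2]
    · simp [h, h.not_gt, mem_so_iff_forall.1 A.2 j i]
  right_inv f := by
    ext p
    simp [p.2]

section Dimension

variable [DecidableEq n] [IsDomain R] [NeZero (2 : R)]

theorem finrank_so : Module.finrank R (so n R) = (Fintype.card n).choose 2 := by
  let order : LinearOrder n := LinearOrder.lift' (Fintype.equivFin n) (Equiv.injective _)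
  rw [← Fintype.card_product_filter_lt, ← Fintype.card_subtype,
    ← Module.finrank_fintype_fun_eq_card R]
  -- The two sides differ in the `DecidableEq n` instance: `order` brings its own.
  convert (soEquivStrictUpper n R).finrank_eq

theorem finrank_skewAdjoint_inf_matrixAnnihilator_single {J : Matrix n n R} (hJ : J.IsSymm)
    (hJu : IsUnit J) (i : n) :
    Module.finrank R
        ↥(skewAdjointMatricesLieSubalgebra J ⊓ matrixAnnihilator (Pi.single i 1)) =
      (Fintype.card n - 1).choose 2 := by
  rw [finrank_skewAdjoint_inf_matrixAnnihilator hJ hJu,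
    (soInfAnnihilatorSingleEquiv i).finrank_eq, finrank_so]
  simp

end Dimension

end General

theorem isSymm_etaM : etaM.IsSymm := by
  ext i j
  fin_cases i <;> fin_cases j <;> rfl

theorem etaM_mul (a : Matrix (Fin 6) (Fin 6) ℝ) :
    etaM * a = of ![-a 5, -a 4, a 2, a 3, -a 1, -a 0] := by
  ext i j
  fin_cases i <;> simp [etaM, mul_apply, Fin.sum_univ_succ]

theorem isUnit_etaM : IsUnit etaM := by
  have etaM_mul_self : etaM * etaM = 1 := by
    rw [etaM_mul]
    ext i j
    fin_cases i <;> fin_cases j <;> simp [etaM]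
  exact IsUnit.of_mul_eq_one _ etaM_mul_self

theorem eps5_eq_single : eps5 = Pi.single 5 1 := by
  ext i
  fin_cases i <;> rfl

/-- The Lie algebra `𝔩` of the Laguerre group as a Lie subalgebra of `𝔤𝔩(6, ℝ)`: the
`η`-skew-adjoint matrices that annihilate `ε₅`. -/
def lagLieSubalgebra : LieSubalgebra ℝ (Matrix (Fin 6) (Fin 6) ℝ) :=
  skewAdjointMatricesLieSubalgebra etaM ⊓ matrixAnnihilator eps5

theorem coe_lagLieSubalgebra : (lagLieSubalgebra : Set (Matrix (Fin 6) (Fin 6) ℝ)) = lagSet := by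
  ext a
  refine and_congr ?_ Iff.rfl
  simp [Matrix.IsSkewAdjoint, IsAdjointPair, eq_neg_iff_add_eq_zero]

theorem finrank_lagLieSubalgebra : Module.finrank ℝ lagLieSubalgebra = 10 := by
  rw [lagLieSubalgebra, eps5_eq_single,
    finrank_skewAdjoint_inf_matrixAnnihilator_single isSymm_etaM isUnit_etaM]
  rfl

theorem mem_lagLieSubalgebra_iff_etaM_mul_mem_so {a : Matrix (Fin 6) (Fin 6) ℝ} :
    a ∈ lagLieSubalgebra ↔ etaM * a ∈ so (Fin 6) ℝ ∧ ∀ i, a i 5 = 0 := by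
  rw [lagLieSubalgebra, LieSubalgebra.mem_inf, eps5_eq_single, mem_matrixAnnihilator_single,
    mul_mem_so_iff isSymm_etaM]

theorem mem_lagLieSubalgebra_iff_entries {a : Matrix (Fin 6) (Fin 6) ℝ} :
    a ∈ lagLieSubalgebra ↔
      ((∀ j, a 0 j = 0) ∧ (∀ i, a i 5 = 0) ∧
       a 1 4 = 0 ∧ a 4 1 = 0 ∧ a 5 0 = 0 ∧
       a 2 2 = 0 ∧ a 3 3 = 0 ∧
       a 4 4 = -(a 1 1) ∧ a 2 3 = -(a 3 2) ∧
       a 4 2 = a 2 1 ∧ a 4 3 = a 3 1 ∧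
       a 2 4 = a 1 2 ∧ a 3 4 = a 1 3 ∧
       a 5 1 = -(a 4 0) ∧ a 5 2 = a 2 0 ∧ a 5 3 = a 3 0 ∧ a 5 4 = -(a 1 0)) := by
  rw [mem_lagLieSubalgebra_iff_etaM_mul_mem_so]
  constructor
  · rintro ⟨mem_so, column⟩
    have skew := mem_so_iff_forall.1 mem_so
    have diagonal := apply_self_eq_zero_of_mem_so mem_so
    have column_mul (j) : (etaM * a) j 5 = 0 := by simp [mul_apply, column]
    rw [etaM_mul] at skew diagonal column_mul
    have row (j) : a 0 j = 0 := by simpa [column_mul j] using skew j 5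
    refine ⟨row, column, ?_⟩
    and_intros
    · simpa using diagonal 4
    · simpa using diagonal 1
    · simpa using diagonal 0
    · simpa using diagonal 2
    · simpa using diagonal 3
    · simpa [neg_eq_iff_eq_neg] using skew 4 1
    · simpa using skew 3 2
    · simpa using skew 2 1
    · simpa using skew 3 1
    · simpa using skew 4 2
    · simpa using skew 4 3
    · simpa [neg_eq_iff_eq_neg] using skew 1 0
    · simpa using skew 2 0
    · simpa using skew 3 0
    · simpa [neg_eq_iff_eq_neg] using skew 4 0
  · intro relations
    refine ⟨mem_so_iff_forall.2 fun i j => ?_, relations.2.1⟩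
    rw [etaM_mul]
    fin_cases i <;> fin_cases j <;> simp [relations]

/-- `𝔩 = {a : aᵀη + ηa = 0, aε₅ = 0}` is a Lie subalgebra of `𝔤𝔩(6,ℝ)` (a linear
subspace closed under the matrix commutator) of real dimension 10, and `a ∈ 𝔩` iff
its first row and last column vanish and its remaining entries are determined by
the ten parameters `a¹₀, a²₀, a³₀, a⁴₀, a¹₁, a¹₂, a¹₃, a²₁, a³₁, a³₂` through the
stated relations. -/
theorem stmt16 :
    (∀ a ∈ lagSet, ∀ b ∈ lagSet, a + b ∈ lagSet) ∧
    (∀ (c : ℝ), ∀ a ∈ lagSet, c • a ∈ lagSet) ∧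
    (0 : Matrix (Fin 6) (Fin 6) ℝ) ∈ lagSet ∧
    (∀ a ∈ lagSet, ∀ b ∈ lagSet, a * b - b * a ∈ lagSet) ∧
    (∃ W : Submodule ℝ (Matrix (Fin 6) (Fin 6) ℝ),
      (W : Set (Matrix (Fin 6) (Fin 6) ℝ)) = lagSet ∧ Module.finrank ℝ W = 10) ∧
    (∀ a : Matrix (Fin 6) (Fin 6) ℝ, a ∈ lagSet ↔
      ((∀ j, a 0 j = 0) ∧ (∀ i, a i 5 = 0) ∧
       a 1 4 = 0 ∧ a 4 1 = 0 ∧ a 5 0 = 0 ∧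
       a 2 2 = 0 ∧ a 3 3 = 0 ∧
       a 4 4 = -(a 1 1) ∧ a 2 3 = -(a 3 2) ∧
       a 4 2 = a 2 1 ∧ a 4 3 = a 3 1 ∧
       a 2 4 = a 1 2 ∧ a 3 4 = a 1 3 ∧
       a 5 1 = -(a 4 0) ∧ a 5 2 = a 2 0 ∧ a 5 3 = a 3 0 ∧ a 5 4 = -(a 1 0))) := by
  simp only [← coe_lagLieSubalgebra, SetLike.mem_coe]
  exact ⟨fun _ ha _ hb => add_mem ha hb, fun c _ ha => lagLieSubalgebra.smul_mem c ha,
    zero_mem _, fun _ ha _ hb => lagLieSubalgebra.lie_mem ha hb,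
    ⟨lagLieSubalgebra.toSubmodule, rfl, finrank_lagLieSubalgebra⟩,
    fun _ => mem_lagLieSubalgebra_iff_entries⟩
end

section
/- Let U ⊆ ℝ² be open and u : U → ℝ smooth. With F = e^{−2u} Δu, P = −e^{2u}(∂ₓF + 4 uₓ F) and Q = e^{2u}(∂_y F + 4 u_y F), one has the identity ∂ₓQ − ∂_y P = 2 Δ( e^{−u} ∂ₓ∂_y (e^{u}) ) on U. Consequently the 1-form η_Φ = P dx + Q dy is closed if and only if u satisfies the Blaschke equation Δ( e^{−u} (e^{u})_{xy} ) = 0, the completely integrable equation governing L-isothermic surfaces. -/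
/-- Partial derivative in the `x`-direction of a function on `ℝ²`. -/
noncomputable def pdx (f : ℝ × ℝ → ℝ) : ℝ × ℝ → ℝ := fun p => fderiv ℝ f p (1, 0)

/-- Partial derivative in the `y`-direction of a function on `ℝ²`. -/
noncomputable def pdy (f : ℝ × ℝ → ℝ) : ℝ × ℝ → ℝ := fun p => fderiv ℝ f p (0, 1)

/-- The Laplacian `Δf = ∂ₓ²f + ∂ᵧ²f` of a function on `ℝ²`. -/
noncomputable def lap (f : ℝ × ℝ → ℝ) : ℝ × ℝ → ℝ :=
  fun p => pdx (pdx f) p + pdy (pdy f) p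

/-- `F = e^{−2u} Δu`. -/
noncomputable def Ffun (u : ℝ × ℝ → ℝ) : ℝ × ℝ → ℝ :=
  fun p => Real.exp (-(2 * u p)) * lap u p

/-!
Write `L = Δu`. Conjugating `∂_v` by an exponential adds a multiple of `∂_v u`, so every exponential
cancels: `e^{2u}(∂_v F + 4 u_v F) = ∂_v L + 2 u_v L` and `e^{-u}(e^u)_{xy} = u_{xy} + u_x u_y`.
Since `Δ` commutes with `∂ₓ` and `∂ᵧ`, and `∇u_x · ∇u_y = u_{xy} Δu` in two variables,
both sides of the identity equal `2(L_{xy} + u_x L_y + u_y L_x + 2 u_{xy} L)`.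
-/

open Filter Topology

section DirectionalDerivative

variable {E F A : Type*} [NormedAddCommGroup E] [NormedSpace ℝ E]
  [NormedAddCommGroup F] [NormedSpace ℝ F] [NormedCommRing A] [NormedAlgebra ℝ A] {p : E}

/-- The derivative `∂_v f` of `f` in the direction `v`, as an operator on functions, so that `pdx`
and `pdy` can be treated together. It is defined through `fderiv`, like them, hence vanishes where
`f` is not differentiable. -/
noncomputable def dirDeriv (v : E) (f : E → F) : E → F := fun q => fderiv ℝ f q v

theorem dirDeriv_congr {f g : E → F} (h : f =ᶠ[𝓝 p] g) (v : E) :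
    dirDeriv v f =ᶠ[𝓝 p] dirDeriv v g :=
  h.fderiv.mono fun _ hq => DFunLike.congr_fun hq v

theorem contDiffAt_dirDeriv {f : E → F} {m n : WithTop ℕ∞} (hf : ContDiffAt ℝ n f p)
    (hmn : m + 1 ≤ n) (v : E) : ContDiffAt ℝ m (dirDeriv v f) p :=
  (hf.fderiv_right hmn).clm_apply contDiffAt_const

theorem dirDeriv_add {f g : E → F} (hf : DifferentiableAt ℝ f p) (hg : DifferentiableAt ℝ g p)
    (v : E) : dirDeriv v (fun q => f q + g q) p = dirDeriv v f p + dirDeriv v g p := by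
  simp [dirDeriv, fderiv_fun_add hf hg]

theorem dirDeriv_neg (f : E → F) (v : E) :
    dirDeriv v (fun q => -f q) p = -dirDeriv v f p := by
  simp [dirDeriv, fderiv_fun_neg]

theorem dirDeriv_mul {f g : E → A} (hf : DifferentiableAt ℝ f p) (hg : DifferentiableAt ℝ g p)
    (v : E) :
    dirDeriv v (fun q => f q * g q) p = dirDeriv v f p * g p + f p * dirDeriv v g p := by
  simp only [dirDeriv, fderiv_fun_mul hf hg, add_apply, smul_apply, smul_eq_mul]
  ring

theorem dirDeriv_const_mul {f : E → A} (hf : DifferentiableAt ℝ f p) (c : A) (v : E) :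
    dirDeriv v (fun q => c * f q) p = c * dirDeriv v f p := by
  simp [dirDeriv, fderiv_const_mul hf]

theorem dirDeriv_exp {f : E → ℝ} (hf : DifferentiableAt ℝ f p) (v : E) :
    dirDeriv v (fun q => Real.exp (f q)) p = Real.exp (f p) * dirDeriv v f p := by
  simp [dirDeriv, fderiv_exp hf]

theorem dirDeriv_exp_mul {f g : E → ℝ} (hf : DifferentiableAt ℝ f p)
    (hg : DifferentiableAt ℝ g p) (v : E) :
    dirDeriv v (fun q => Real.exp (f q) * g q) p =
      Real.exp (f p) * (dirDeriv v g p + dirDeriv v f p * g p) := by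
  rw [dirDeriv_mul hf.exp hg, dirDeriv_exp hf]
  ring

theorem dirDeriv_comm {f : E → F} (hf : ContDiffAt ℝ 2 f p) (v w : E) :
    dirDeriv v (dirDeriv w f) p = dirDeriv w (dirDeriv v f) p := by
  have hd : DifferentiableAt ℝ (fderiv ℝ f) p :=
    (hf.fderiv_right (m := 1) one_add_one_eq_two.le).differentiableAt one_ne_zero
  have second_fderiv (a b : E) : dirDeriv a (dirDeriv b f) p = fderiv ℝ (fderiv ℝ f) p a b := by
    change fderiv ℝ (fun q => fderiv ℝ f q b) p a = _
    simp [fderiv_clm_apply hd (differentiableAt_const b)]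
  rw [second_fderiv, second_fderiv]
  exact (hf.isSymmSndFDerivAt minSmoothness_of_isRCLikeNormedField.le).eq v w

theorem dirDeriv_dirDeriv_add {f g : E → F} (hf : ContDiffAt ℝ 2 f p) (hg : ContDiffAt ℝ 2 g p)
    (v w : E) :
    dirDeriv v (dirDeriv w (fun q => f q + g q)) p =
      dirDeriv v (dirDeriv w f) p + dirDeriv v (dirDeriv w g) p := by
  have first_order : dirDeriv w (fun q => f q + g q) =ᶠ[𝓝 p]
      fun q => dirDeriv w f q + dirDeriv w g q := by
    filter_upwards [hf.eventually (by simp), hg.eventually (by simp)] with q hfq hgq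
    exact dirDeriv_add (hfq.differentiableAt two_ne_zero) (hgq.differentiableAt two_ne_zero) w
  have hf' := contDiffAt_dirDeriv hf one_add_one_eq_two.le w
  have hg' := contDiffAt_dirDeriv hg one_add_one_eq_two.le w
  rw [(dirDeriv_congr first_order v).eq_of_nhds,
    dirDeriv_add (hf'.differentiableAt one_ne_zero) (hg'.differentiableAt one_ne_zero)]

theorem dirDeriv_dirDeriv_mul_self {f g : E → A} (hf : ContDiffAt ℝ 2 f p)
    (hg : ContDiffAt ℝ 2 g p) (v : E) :
    dirDeriv v (dirDeriv v (fun q => f q * g q)) p =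
      dirDeriv v (dirDeriv v f) p * g p + 2 * (dirDeriv v f p * dirDeriv v g p) +
        f p * dirDeriv v (dirDeriv v g) p := by
  have first_order : dirDeriv v (fun q => f q * g q) =ᶠ[𝓝 p]
      fun q => dirDeriv v f q * g q + f q * dirDeriv v g q := by
    filter_upwards [hf.eventually (by simp), hg.eventually (by simp)] with q hfq hgq
    exact dirDeriv_mul (hfq.differentiableAt two_ne_zero) (hgq.differentiableAt two_ne_zero) v
  have hf₀ := hf.differentiableAt two_ne_zero
  have hg₀ := hg.differentiableAt two_ne_zero
  have hf₁ := (contDiffAt_dirDeriv hf one_add_one_eq_two.le v).differentiableAt one_ne_zero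
  have hg₁ := (contDiffAt_dirDeriv hg one_add_one_eq_two.le v).differentiableAt one_ne_zero
  rw [(dirDeriv_congr first_order v).eq_of_nhds, dirDeriv_add (hf₁.fun_mul hg₀) (hf₀.fun_mul hg₁),
    dirDeriv_mul hf₁ hg₀, dirDeriv_mul hf₀ hg₁]
  ring

theorem dirDeriv_dirDeriv_dirDeriv_rotate {f : E → F} (hf : ContDiffAt ℝ 3 f p) (v w z : E) :
    dirDeriv v (dirDeriv w (dirDeriv z f)) p = dirDeriv z (dirDeriv v (dirDeriv w f)) p := by
  have comm_near : dirDeriv w (dirDeriv z f) =ᶠ[𝓝 p] dirDeriv z (dirDeriv w f) :=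
    (hf.eventually (by simp)).mono fun q hq => dirDeriv_comm (hq.of_le (by norm_num)) w z
  rw [(dirDeriv_congr comm_near v).eq_of_nhds,
    dirDeriv_comm (contDiffAt_dirDeriv hf two_add_one_eq_three.le w)]

theorem exp_neg_mul_dirDeriv_dirDeriv_exp {u : E → ℝ} (hu : ContDiffAt ℝ 2 u p) (v w : E) :
    Real.exp (-u p) * dirDeriv v (dirDeriv w (fun q => Real.exp (u q))) p =
      dirDeriv v (dirDeriv w u) p + dirDeriv v u p * dirDeriv w u p := by
  have first_order : dirDeriv w (fun q => Real.exp (u q)) =ᶠ[𝓝 p]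
      fun q => Real.exp (u q) * dirDeriv w u q :=
    (hu.eventually (by simp)).mono fun q hq => dirDeriv_exp (hq.differentiableAt two_ne_zero) w
  have hw := (contDiffAt_dirDeriv hu one_add_one_eq_two.le w).differentiableAt one_ne_zero
  rw [(dirDeriv_congr first_order v).eq_of_nhds,
    dirDeriv_exp_mul (hu.differentiableAt two_ne_zero) hw, ← mul_assoc, ← Real.exp_add,
    neg_add_cancel, Real.exp_zero, one_mul]

end DirectionalDerivative

section Laplacian

variable {f g : ℝ × ℝ → ℝ} {p : ℝ × ℝ}

theorem pdx_eq_dirDeriv : pdx = dirDeriv (1, 0) := rfl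

theorem pdy_eq_dirDeriv : pdy = dirDeriv (0, 1) := rfl

theorem lap_congr (h : f =ᶠ[𝓝 p] g) : lap f p = lap g p :=
  congrArg₂ (· + ·) (dirDeriv_congr (dirDeriv_congr h _) _).eq_of_nhds
    (dirDeriv_congr (dirDeriv_congr h _) _).eq_of_nhds

theorem contDiffAt_lap {m n : WithTop ℕ∞} (hf : ContDiffAt ℝ n f p) (hmn : m + 2 ≤ n) :
    ContDiffAt ℝ m (lap f) p := by
  have hmn' : m + 1 + 1 ≤ n := by rwa [add_assoc, one_add_one_eq_two]
  have second_order (v : ℝ × ℝ) : ContDiffAt ℝ m (dirDeriv v (dirDeriv v f)) p :=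
    contDiffAt_dirDeriv (contDiffAt_dirDeriv hf hmn' v) le_rfl v
  exact (second_order _).add (second_order _)

theorem lap_add (hf : ContDiffAt ℝ 2 f p) (hg : ContDiffAt ℝ 2 g p) :
    lap (fun q => f q + g q) p = lap f p + lap g p := by
  simp only [lap, pdx_eq_dirDeriv, pdy_eq_dirDeriv, dirDeriv_dirDeriv_add hf hg]
  ring

theorem lap_mul (hf : ContDiffAt ℝ 2 f p) (hg : ContDiffAt ℝ 2 g p) :
    lap (fun q => f q * g q) p =
      lap f p * g p + 2 * (pdx f p * pdx g p + pdy f p * pdy g p) + f p * lap g p := by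
  simp only [lap, pdx_eq_dirDeriv, pdy_eq_dirDeriv, dirDeriv_dirDeriv_mul_self hf hg]
  ring

theorem lap_dirDeriv (hf : ContDiffAt ℝ 3 f p) (v : ℝ × ℝ) :
    lap (dirDeriv v f) p = dirDeriv v (lap f) p := by
  have second_order (w : ℝ × ℝ) : DifferentiableAt ℝ (dirDeriv w (dirDeriv w f)) p :=
    (contDiffAt_dirDeriv (contDiffAt_dirDeriv hf two_add_one_eq_three.le w)
      one_add_one_eq_two.le w).differentiableAt one_ne_zero
  calc
    lap (dirDeriv v f) p =
        dirDeriv v (dirDeriv (1, 0) (dirDeriv (1, 0) f)) p +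
          dirDeriv v (dirDeriv (0, 1) (dirDeriv (0, 1) f)) p :=
      congrArg₂ (· + ·) (dirDeriv_dirDeriv_dirDeriv_rotate hf _ _ v)
        (dirDeriv_dirDeriv_dirDeriv_rotate hf _ _ v)
    _ = dirDeriv v (lap f) p := (dirDeriv_add (second_order _) (second_order _) v).symm

theorem lap_dirDeriv_dirDeriv (hf : ContDiffAt ℝ 4 f p) (v w : ℝ × ℝ) :
    lap (dirDeriv v (dirDeriv w f)) p = dirDeriv v (dirDeriv w (lap f)) p := by
  have comm_near : lap (dirDeriv w f) =ᶠ[𝓝 p] dirDeriv w (lap f) :=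
    (hf.eventually (by simp)).mono fun q hq => lap_dirDeriv (hq.of_le (by norm_num)) w
  rw [lap_dirDeriv (contDiffAt_dirDeriv hf three_add_one_eq_four.le w),
    (dirDeriv_congr comm_near v).eq_of_nhds]

theorem pdx_pdx_mul_pdx_pdy_add_pdy_pdx_mul_pdy_pdy (hf : ContDiffAt ℝ 2 f p) :
    pdx (pdx f) p * pdx (pdy f) p + pdy (pdx f) p * pdy (pdy f) p = pdx (pdy f) p * lap f p := by
  have mixed : pdy (pdx f) p = pdx (pdy f) p := dirDeriv_comm hf _ _
  rw [mixed, lap]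
  ring

end Laplacian

section Blaschke

variable {u : ℝ × ℝ → ℝ} {p : ℝ × ℝ}

theorem lap_exp_neg_mul_pdx_pdy_exp (hu : ContDiffAt ℝ 4 u p) :
    lap (fun q => Real.exp (-u q) * pdx (pdy fun z => Real.exp (u z)) q) p =
      pdx (pdy (lap u)) p + pdx u p * pdy (lap u) p + pdy u p * pdx (lap u) p +
        2 * (pdx (pdy u) p * lap u p) := by
  have hu₃ : ContDiffAt ℝ 3 u p := hu.of_le (by norm_num)
  have hu₂ : ContDiffAt ℝ 2 u p := hu.of_le (by norm_num)
  have hx : ContDiffAt ℝ 2 (pdx u) p := contDiffAt_dirDeriv hu₃ two_add_one_eq_three.le _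
  have hy : ContDiffAt ℝ 2 (pdy u) p := contDiffAt_dirDeriv hu₃ two_add_one_eq_three.le _
  have hxy : ContDiffAt ℝ 2 (pdx (pdy u)) p :=
    contDiffAt_dirDeriv (contDiffAt_dirDeriv hu three_add_one_eq_four.le _)
      two_add_one_eq_three.le _
  have exp_cancel : (fun q => Real.exp (-u q) * pdx (pdy fun z => Real.exp (u z)) q) =ᶠ[𝓝 p]
      fun q => pdx (pdy u) q + pdx u q * pdy u q :=
    (hu.eventually (by simp)).mono fun q hq =>
      exp_neg_mul_dirDeriv_dirDeriv_exp (hq.of_le (by norm_num)) _ _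
  have lap_x : lap (pdx u) p = pdx (lap u) p := lap_dirDeriv hu₃ _
  have lap_y : lap (pdy u) p = pdy (lap u) p := lap_dirDeriv hu₃ _
  have lap_xy : lap (pdx (pdy u)) p = pdx (pdy (lap u)) p := lap_dirDeriv_dirDeriv hu _ _
  rw [lap_congr exp_cancel, lap_add hxy (hx.mul hy), lap_mul hx hy, lap_x, lap_y, lap_xy,
    pdx_pdx_mul_pdx_pdy_add_pdy_pdx_mul_pdy_pdy hu₂]
  ring

/-- The function `e^{2u}(∂_v F + 4 (∂_v u) F)` with `F = e^{-2u} Δu`, which gives both coefficients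
of `η_Φ = P dx + Q dy`: `P` is its negative for `v = (1, 0)`, and `Q` is its value for
`v = (0, 1)`. -/
noncomputable def etaCoeff (u : ℝ × ℝ → ℝ) (v : ℝ × ℝ) : ℝ × ℝ → ℝ :=
  fun q => Real.exp (2 * u q) * (dirDeriv v (Ffun u) q + 4 * dirDeriv v u q * Ffun u q)

theorem etaCoeff_apply (hu : DifferentiableAt ℝ u p) (hL : DifferentiableAt ℝ (lap u) p)
    (v : ℝ × ℝ) :
    etaCoeff u v p = dirDeriv v (lap u) p + 2 * (dirDeriv v u p * lap u p) := by
  have deriv_F : dirDeriv v (Ffun u) p =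
      Real.exp (-(2 * u p)) * (dirDeriv v (lap u) p - 2 * dirDeriv v u p * lap u p) := by
    unfold Ffun
    rw [dirDeriv_exp_mul (hu.const_mul 2).fun_neg hL, dirDeriv_neg, dirDeriv_const_mul hu]
    ring
  have exp_cancel : Real.exp (2 * u p) * Real.exp (-(2 * u p)) = 1 := by
    rw [← Real.exp_add, add_neg_cancel, Real.exp_zero]
  rw [etaCoeff, deriv_F, Ffun]
  linear_combination (dirDeriv v (lap u) p + 2 * (dirDeriv v u p * lap u p)) * exp_cancel

theorem dirDeriv_etaCoeff (hu : ContDiffAt ℝ 4 u p) (v w : ℝ × ℝ) :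
    dirDeriv w (etaCoeff u v) p =
      dirDeriv w (dirDeriv v (lap u)) p +
        2 * (dirDeriv w (dirDeriv v u) p * lap u p + dirDeriv v u p * dirDeriv w (lap u) p) := by
  have lap_contDiffAt {q : ℝ × ℝ} (hq : ContDiffAt ℝ 4 u q) : ContDiffAt ℝ 2 (lap u) q :=
    contDiffAt_lap hq two_add_two_eq_four.le
  have exp_cancel : etaCoeff u v =ᶠ[𝓝 p]
      fun q => dirDeriv v (lap u) q + 2 * (dirDeriv v u q * lap u q) :=
    (hu.eventually (by simp)).mono fun q hq => etaCoeff_apply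
      (hq.differentiableAt four_ne_zero) ((lap_contDiffAt hq).differentiableAt two_ne_zero) v
  have hL := (lap_contDiffAt hu).differentiableAt two_ne_zero
  have hvL := (contDiffAt_dirDeriv (lap_contDiffAt hu)
    one_add_one_eq_two.le v).differentiableAt one_ne_zero
  have hv := (contDiffAt_dirDeriv hu three_add_one_eq_four.le v).differentiableAt three_ne_zero
  rw [(dirDeriv_congr exp_cancel w).eq_of_nhds, dirDeriv_add hvL ((hv.fun_mul hL).const_mul 2),
    dirDeriv_const_mul (hv.fun_mul hL), dirDeriv_mul hv hL]

end Blaschke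

theorem stmt17_general {u : ℝ × ℝ → ℝ} {p : ℝ × ℝ} (hu : ContDiffAt ℝ 4 u p) :
    pdx (fun q => Real.exp (2 * u q) *
        (pdy (Ffun u) q + 4 * pdy u q * Ffun u q)) p -
      pdy (fun q => -Real.exp (2 * u q) *
        (pdx (Ffun u) q + 4 * pdx u q * Ffun u q)) p =
      2 * lap (fun q => Real.exp (-(u q)) *
        pdx (pdy (fun z => Real.exp (u z))) q) p := by
  have hL : ContDiffAt ℝ 2 (lap u) p := contDiffAt_lap hu two_add_two_eq_four.le
  have mixed_u : pdy (pdx u) p = pdx (pdy u) p := dirDeriv_comm (hu.of_le (by norm_num)) _ _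
  have mixed_L : pdy (pdx (lap u)) p = pdx (pdy (lap u)) p := dirDeriv_comm hL _ _
  have pdx_Q : pdx (etaCoeff u (0, 1)) p = pdx (pdy (lap u)) p +
      2 * (pdx (pdy u) p * lap u p + pdy u p * pdx (lap u) p) := dirDeriv_etaCoeff hu _ _
  have pdy_P : pdy (fun q => -etaCoeff u (1, 0) q) p = -(pdy (pdx (lap u)) p +
      2 * (pdy (pdx u) p * lap u p + pdx u p * pdy (lap u) p)) :=
    (dirDeriv_neg _ _).trans (congrArg Neg.neg (dirDeriv_etaCoeff hu _ _))
  simp only [neg_mul]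
  change pdx (etaCoeff u (0, 1)) p - pdy (fun q => -etaCoeff u (1, 0) q) p = _
  rw [pdx_Q, pdy_P, mixed_u, mixed_L, lap_exp_neg_mul_pdx_pdy_exp hu]
  ring

/-- With `F = e^{−2u}Δu`, `P = −e^{2u}(∂ₓF + 4uₓF)` and `Q = e^{2u}(∂ᵧF + 4uᵧF)`,
one has `∂ₓQ − ∂ᵧP = 2Δ(e^{−u} ∂ₓ∂ᵧ(e^{u}))` on `U`; consequently the 1-form
`η_Φ = P dx + Q dy` is closed iff `u` satisfies the Blaschke equation
`Δ(e^{−u}(e^{u})_{xy}) = 0`. -/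
theorem stmt17 (U : Set (ℝ × ℝ)) (hU : IsOpen U) (u : ℝ × ℝ → ℝ)
    (hu : ContDiffOn ℝ (⊤ : ℕ∞) u U) :
    ∀ p ∈ U,
      pdx (fun q => Real.exp (2 * u q) *
        (pdy (Ffun u) q + 4 * pdy u q * Ffun u q)) p -
      pdy (fun q => -Real.exp (2 * u q) *
        (pdx (Ffun u) q + 4 * pdx u q * Ffun u q)) p =
      2 * lap (fun q => Real.exp (-(u q)) *
        pdx (pdy (fun z => Real.exp (u z))) q) p :=
  fun _ hp => stmt17_general ((hu.contDiffAt (hU.mem_nhds hp)).of_le ENat.LEInfty.out)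
end

section
/- Let U ⊆ ℝ² be open and connected and u : U → ℝ smooth. With F = e^{−2u}Δu, the two functions ∂ₓF + 4uₓF and ∂_yF + 4u_yF vanish identically on U (equivalently, the 1-form η_Φ vanishes identically) if and only if there exists a constant c ∈ ℝ such that Δu = c e^{−2u} on U. In particular, the Blaschke potential Φ = e^{u} of a nondegenerate L-minimal isothermic surface satisfies Δu = c e^{−2u} for some constant c, i.e. every nondegenerate L-minimal isothermic surface is special L-isothermic. -/
/-! The system `dF + 4F du = 0` has the integrating factor `e^{4u}`: it says exactly that
`d(e^{4u}F) = 0`, which on a connected open set means that `e^{4u}F` is constant. For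
`F = e^{−2u}Δu` this constant is `e^{2u}Δu`. -/

section IntegratingFactor

variable {E G : Type*} [NormedAddCommGroup E] [NormedSpace ℝ E]
  [NormedAddCommGroup G] [NormedSpace ℝ G] {u : E → ℝ} {F : E → G} {U : Set E} {p : E}

theorem fderiv_exp_smul (hu : DifferentiableAt ℝ u p) (hF : DifferentiableAt ℝ F p) :
    fderiv ℝ (fun q => Real.exp (u q) • F q) p =
      Real.exp (u p) • (fderiv ℝ F p + (fderiv ℝ u p).smulRight (F p)) := by
  rw [fderiv_fun_smul hu.exp hF, fderiv_exp hu]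
  ext v
  simp [mul_smul]

theorem fderiv_exp_smul_eq_zero_iff (hu : DifferentiableAt ℝ u p) (hF : DifferentiableAt ℝ F p) :
    fderiv ℝ (fun q => Real.exp (u q) • F q) p = 0 ↔
      fderiv ℝ F p + (fderiv ℝ u p).smulRight (F p) = 0 := by
  rw [fderiv_exp_smul hu hF, smul_eq_zero_iff_right (Real.exp_ne_zero _)]

theorem forall_fderiv_add_smulRight_eq_zero_iff_exists_exp_smul_eq
    (hU : IsOpen U) (hUc : IsPreconnected U)
    (hu : DifferentiableOn ℝ u U) (hF : DifferentiableOn ℝ F U) :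
    (∀ p ∈ U, fderiv ℝ F p + (fderiv ℝ u p).smulRight (F p) = 0) ↔
      ∃ c : G, ∀ p ∈ U, Real.exp (u p) • F p = c := by
  have fderiv_eq_zero_iff : ∀ p ∈ U, fderiv ℝ (fun q => Real.exp (u q) • F q) p = 0 ↔
      fderiv ℝ F p + (fderiv ℝ u p).smulRight (F p) = 0 := fun p hp =>
    fderiv_exp_smul_eq_zero_iff (hu.differentiableAt (hU.mem_nhds hp))
      (hF.differentiableAt (hU.mem_nhds hp))
  constructor
  · intro h
    exact hU.exists_is_const_of_fderiv_eq_zero hUc (hu.exp.smul hF)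
      fun p hp => (fderiv_eq_zero_iff p hp).2 (h p hp)
  · rintro ⟨c, hc⟩ p hp
    have const_near : (fun q => Real.exp (u q) • F q) =ᶠ[nhds p] fun _ => c :=
      Filter.eventuallyEq_of_mem (hU.mem_nhds hp) hc
    rw [← fderiv_eq_zero_iff p hp, const_near.fderiv_eq, fderiv_fun_const, Pi.zero_apply]

end IntegratingFactor

section Regularity

variable {U : Set (ℝ × ℝ)} {f u : ℝ × ℝ → ℝ} {n : WithTop ℕ∞}

theorem contDiffOn_pdx (hU : IsOpen U) (hf : ContDiffOn ℝ (n + 1) f U) :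
    ContDiffOn ℝ n (pdx f) U :=
  (hf.fderiv_of_isOpen hU le_rfl).clm_apply contDiffOn_const

theorem contDiffOn_pdy (hU : IsOpen U) (hf : ContDiffOn ℝ (n + 1) f U) :
    ContDiffOn ℝ n (pdy f) U :=
  (hf.fderiv_of_isOpen hU le_rfl).clm_apply contDiffOn_const

theorem contDiffOn_lap (hU : IsOpen U) (hf : ContDiffOn ℝ (n + 2) f U) :
    ContDiffOn ℝ n (lap f) U := by
  rw [← one_add_one_eq_two, ← add_assoc] at hf
  exact (contDiffOn_pdx hU (contDiffOn_pdx hU hf)).add (contDiffOn_pdy hU (contDiffOn_pdy hU hf))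

theorem contDiffOn_Ffun (hU : IsOpen U) (hu : ContDiffOn ℝ (n + 2) u U) :
    ContDiffOn ℝ n (Ffun u) U :=
  (contDiffOn_const.mul (hu.of_le le_self_add)).neg.exp.mul (contDiffOn_lap hU hu)

end Regularity

theorem continuousLinearMap_prod_eq_zero_iff {R M : Type*} [Semiring R] [TopologicalSpace R]
    [AddCommMonoid M] [TopologicalSpace M] [Module R M] (A : R × R →L[R] M) :
    A = 0 ↔ A (1, 0) = 0 ∧ A (0, 1) = 0 := by
  refine ⟨fun h => by simp [h], fun ⟨hx, hy⟩ => ?_⟩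
  ext
  · simpa using hx
  · simpa using hy

theorem fderiv_add_smulRight_eq_zero_iff_pdx_pdy {u F : ℝ × ℝ → ℝ} {p : ℝ × ℝ} (k : ℝ) :
    fderiv ℝ F p + (fderiv ℝ (k • u) p).smulRight (F p) = 0 ↔
      pdx F p + k * pdx u p * F p = 0 ∧ pdy F p + k * pdy u p * F p = 0 := by
  simp [continuousLinearMap_prod_eq_zero_iff, fderiv_const_smul_field, pdx, pdy]

theorem exp_four_mul_Ffun_eq_iff (u : ℝ × ℝ → ℝ) (p : ℝ × ℝ) (c : ℝ) :
    Real.exp (4 * u p) * Ffun u p = c ↔ lap u p = c * Real.exp (-(2 * u p)) := by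
  have h : Real.exp (4 * u p) * Ffun u p = lap u p * Real.exp (2 * u p) := by
    rw [Ffun, ← mul_assoc, ← Real.exp_add, mul_comm]
    ring_nf
  rw [h, Real.exp_neg, eq_mul_inv_iff_mul_eq₀ (Real.exp_ne_zero _)]

theorem stmt19_general (U : Set (ℝ × ℝ)) (hU : IsOpen U) (hUc : IsPreconnected U)
    (u : ℝ × ℝ → ℝ) (hu : ContDiffOn ℝ 3 u U) :
    (∀ p ∈ U,
      pdx (Ffun u) p + 4 * pdx u p * Ffun u p = 0 ∧
      pdy (Ffun u) p + 4 * pdy u p * Ffun u p = 0) ↔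
    (∃ c : ℝ, ∀ p ∈ U, lap u p = c * Real.exp (-(2 * u p))) := by
  have hu' : DifferentiableOn ℝ ((4 : ℝ) • u) U :=
    (hu.differentiableOn (by norm_num)).const_smul 4
  have hF : DifferentiableOn ℝ (Ffun u) U :=
    (contDiffOn_Ffun (n := 1) hU (hu.of_le (by norm_num))).differentiableOn one_ne_zero
  simpa only [fderiv_add_smulRight_eq_zero_iff_pdx_pdy, Pi.smul_apply, smul_eq_mul,
    exp_four_mul_Ffun_eq_iff]
    using forall_fderiv_add_smulRight_eq_zero_iff_exists_exp_smul_eq hU hUc hu' hF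

/-- Let `U ⊆ ℝ²` be open and connected and `u` smooth on `U`. With `F = e^{−2u}Δu`,
the functions `∂ₓF + 4uₓF` and `∂ᵧF + 4uᵧF` vanish identically on `U`
(equivalently, the 1-form `η_Φ` vanishes identically) iff there is a constant
`c ∈ ℝ` with `Δu = c e^{−2u}` on `U`: every nondegenerate `L`-minimal isothermic
surface is special `L`-isothermic. -/
theorem stmt19 (U : Set (ℝ × ℝ)) (hU : IsOpen U) (hUc : IsConnected U)
    (u : ℝ × ℝ → ℝ) (hu : ContDiffOn ℝ (⊤ : ℕ∞) u U) :
    (∀ p ∈ U,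
      pdx (Ffun u) p + 4 * pdx u p * Ffun u p = 0 ∧
      pdy (Ffun u) p + 4 * pdy u p * Ffun u p = 0) ↔
    (∃ c : ℝ, ∀ p ∈ U, lap u p = c * Real.exp (-(2 * u p))) :=
  stmt19_general U hU hUc.isPreconnected u (contDiffOn_infty.1 hu 3)
end
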